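/- arXiv:2205.04574 — 2 statements merged into one kernel-verified Lean document; each statement's English description precedes it below -/
import Mathlib

section
/- Let n ≥ 1 and 1 ≤ p < ∞, and set C_p = ∫_{ℝⁿ} (4π)^{-n/2} e^{-‖z‖²/4} ‖z‖^p dz. Then for every smooth compactly supported f : ℝⁿ → ℝ and every t > 0 one has t^{-p/2} ∫_{ℝⁿ} ∫_{ℝⁿ} p_t(x,y) |f(y) − f(x)|^p dy dx ≤ C_p ∫_{ℝⁿ} ‖∇f(x)‖^p dx. -/
open Real MeasureTheory

/-!
Along the segment from `x` to `x + w`, the fundamental theorem of calculus and Jensen's inequality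
bound `‖f (x + w) - f x‖ ^ p` by `‖w‖ ^ p` times the average of `‖∇f‖ ^ p` over the segment.
Integrating in `x` removes the average by translation invariance, so
`∫ ‖f (x + w) - f x‖ ^ p dx ≤ ‖w‖ ^ p ∫ ‖∇f‖ ^ p`. Integrating this in `w` against the heat
kernel leaves its `p`-th moment, which by the substitution `w = √t z` is `t ^ (p / 2)` times the
moment at time `1`.
-/

section Translation

open scoped ENNReal

lemma rpow_lintegral_le_lintegral_rpow {α : Type*} [MeasurableSpace α] {ν : Measure α}
    [IsProbabilityMeasure ν] {g : α → ℝ≥0∞} (hg : AEMeasurable g ν) {p : ℝ} (hp : 1 ≤ p) :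
    (∫⁻ a, g a ∂ν) ^ p ≤ ∫⁻ a, g a ^ p ∂ν := by
  have hp_pos : 0 < p := zero_lt_one.trans_le hp
  have h := eLpNorm'_le_eLpNorm'_of_exponent_le zero_lt_one hp ν hg.aestronglyMeasurable
  simpa [eLpNorm', ENNReal.le_rpow_inv_iff hp_pos] using h

lemma enorm_integral_of_nonneg {α : Type*} [MeasurableSpace α] {ν : Measure α} {g : α → ℝ}
    (hg : Integrable g ν) (hg_nonneg : 0 ≤ g) : ‖∫ a, g a ∂ν‖ₑ = ∫⁻ a, ‖g a‖ₑ ∂ν := by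
  rw [← ofReal_integral_norm_eq_lintegral_enorm hg,
    Real.enorm_of_nonneg (integral_nonneg hg_nonneg)]
  simp only [Real.norm_of_nonneg (hg_nonneg _)]

lemma enorm_rpow_norm {G : Type*} [NormedAddCommGroup G] (v : G) {p : ℝ} (hp : 0 ≤ p) :
    ‖‖v‖ ^ p‖ₑ = ‖v‖ₑ ^ p := by
  rw [Real.enorm_rpow_of_nonneg (norm_nonneg v) hp, enorm_norm]

variable {E F : Type*} [NormedAddCommGroup E] [NormedSpace ℝ E]
  [NormedAddCommGroup F] [NormedSpace ℝ F] {f : E → F} {p : ℝ}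

lemma enorm_sub_le_lintegral_enorm_fderiv (hf : ContDiff ℝ 1 f) (x w : E) :
    ‖f (x + w) - f x‖ₑ ≤ ∫⁻ s in Set.Icc (0 : ℝ) 1, ‖w‖ₑ * ‖fderiv ℝ f (x + s • w)‖ₑ := by
  have hline (s : ℝ) : HasDerivAt (fun s : ℝ ↦ x + s • w) w s := by
    simpa using ((hasDerivAt_id s).smul_const w).const_add x
  have hderiv (s : ℝ) : deriv (fun s : ℝ ↦ f (x + s • w)) s = fderiv ℝ f (x + s • w) w :=
    ((hf.differentiable one_ne_zero _).hasFDerivAt.comp_hasDerivAt s (hline s)).deriv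
  have hpath : ContDiff ℝ 1 fun s : ℝ ↦ f (x + s • w) := hf.comp (by fun_prop)
  calc ‖f (x + w) - f x‖ₑ
      ≤ ∫⁻ s in Set.Icc (0 : ℝ) 1, ‖fderiv ℝ f (x + s • w) w‖ₑ := by
        simpa [hderiv] using
          enorm_sub_le_lintegral_deriv_of_contDiffOn_Icc hpath.contDiffOn zero_le_one
    _ ≤ ∫⁻ s in Set.Icc (0 : ℝ) 1, ‖w‖ₑ * ‖fderiv ℝ f (x + s • w)‖ₑ :=
        lintegral_mono fun s ↦
          (ContinuousLinearMap.le_opENorm _ _).trans_eq (mul_comm _ _)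

lemma rpow_enorm_sub_le_lintegral_rpow_enorm_fderiv (hf : ContDiff ℝ 1 f) (hp : 1 ≤ p)
    (x w : E) :
    ‖f (x + w) - f x‖ₑ ^ p ≤
      ∫⁻ s in Set.Icc (0 : ℝ) 1, ‖w‖ₑ ^ p * ‖fderiv ℝ f (x + s • w)‖ₑ ^ p := by
  have hp_nonneg : 0 ≤ p := zero_le_one.trans hp
  have hcont : Continuous fun s : ℝ ↦ ‖fderiv ℝ f (x + s • w)‖ₑ :=
    ((hf.continuous_fderiv one_ne_zero).comp (by fun_prop)).enorm
  have : IsProbabilityMeasure (volume.restrict (Set.Icc (0 : ℝ) 1)) := ⟨by simp⟩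
  calc ‖f (x + w) - f x‖ₑ ^ p
      ≤ (∫⁻ s in Set.Icc (0 : ℝ) 1, ‖w‖ₑ * ‖fderiv ℝ f (x + s • w)‖ₑ) ^ p :=
        ENNReal.rpow_le_rpow (enorm_sub_le_lintegral_enorm_fderiv hf x w) hp_nonneg
    _ ≤ ∫⁻ s in Set.Icc (0 : ℝ) 1, (‖w‖ₑ * ‖fderiv ℝ f (x + s • w)‖ₑ) ^ p :=
        rpow_lintegral_le_lintegral_rpow (hcont.measurable.const_mul _).aemeasurable hp
    _ = ∫⁻ s in Set.Icc (0 : ℝ) 1, ‖w‖ₑ ^ p * ‖fderiv ℝ f (x + s • w)‖ₑ ^ p := by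
        simp only [ENNReal.mul_rpow_of_nonneg _ _ hp_nonneg]

variable [MeasurableSpace E] [BorelSpace E] {μ : Measure E} [SFinite μ]
  [μ.IsAddLeftInvariant]

lemma lintegral_rpow_enorm_translate_sub_le (hf : ContDiff ℝ 1 f) (hp : 1 ≤ p) (w : E) :
    ∫⁻ x, ‖f (x + w) - f x‖ₑ ^ p ∂μ ≤ ‖w‖ₑ ^ p * ∫⁻ x, ‖fderiv ℝ f x‖ₑ ^ p ∂μ := by
  have hfderiv : Continuous fun x ↦ ‖fderiv ℝ f x‖ₑ :=
    (hf.continuous_fderiv one_ne_zero).enorm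
  calc ∫⁻ x, ‖f (x + w) - f x‖ₑ ^ p ∂μ
      ≤ ∫⁻ x, (∫⁻ s in Set.Icc (0 : ℝ) 1, ‖w‖ₑ ^ p * ‖fderiv ℝ f (x + s • w)‖ₑ ^ p) ∂μ :=
        lintegral_mono fun x ↦ rpow_enorm_sub_le_lintegral_rpow_enorm_fderiv hf hp x w
    _ = ∫⁻ s in Set.Icc (0 : ℝ) 1, ∫⁻ x, ‖w‖ₑ ^ p * ‖fderiv ℝ f (x + s • w)‖ₑ ^ p ∂μ := by
        have hcont : Continuous fun q : E × ℝ ↦ ‖fderiv ℝ f (q.1 + q.2 • w)‖ₑ :=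
          hfderiv.comp (by fun_prop)
        exact lintegral_lintegral_swap ((hcont.measurable.pow_const p).const_mul _).aemeasurable
    _ = ∫⁻ _ in Set.Icc (0 : ℝ) 1, ∫⁻ x, ‖w‖ₑ ^ p * ‖fderiv ℝ f x‖ₑ ^ p ∂μ :=
        lintegral_congr fun s ↦
          lintegral_add_right_eq_self (fun x ↦ ‖w‖ₑ ^ p * ‖fderiv ℝ f x‖ₑ ^ p) (s • w)
    _ = ‖w‖ₑ ^ p * ∫⁻ x, ‖fderiv ℝ f x‖ₑ ^ p ∂μ := by
        rw [lintegral_const_mul _ (hfderiv.measurable.pow_const p)]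
        simp

lemma lintegral_kernel_mul_rpow_enorm_sub_le [SecondCountableTopology E] {K : E → ℝ≥0∞}
    (hK : AEMeasurable K μ) (hf : ContDiff ℝ 1 f) (hp : 1 ≤ p) :
    ∫⁻ x, ∫⁻ y, K (y - x) * ‖f y - f x‖ₑ ^ p ∂μ ∂μ ≤
      (∫⁻ w, K w * ‖w‖ₑ ^ p ∂μ) * ∫⁻ x, ‖fderiv ℝ f x‖ₑ ^ p ∂μ := by
  have hincrement : Measurable fun q : E × E ↦ ‖f (q.1 + q.2) - f q.1‖ₑ ^ p := by
    have hcont : Continuous fun q : E × E ↦ f (q.1 + q.2) - f q.1 := by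
      have := hf.continuous
      fun_prop
    exact hcont.enorm.measurable.pow_const p
  calc ∫⁻ x, ∫⁻ y, K (y - x) * ‖f y - f x‖ₑ ^ p ∂μ ∂μ
      = ∫⁻ x, ∫⁻ w, K w * ‖f (x + w) - f x‖ₑ ^ p ∂μ ∂μ := by
        refine lintegral_congr fun x ↦ ?_
        rw [← lintegral_add_left_eq_self _ x]
        simp only [add_sub_cancel_left]
    _ = ∫⁻ w, ∫⁻ x, K w * ‖f (x + w) - f x‖ₑ ^ p ∂μ ∂μ :=
        lintegral_lintegral_swap (hK.comp_snd.mul hincrement.aemeasurable)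
    _ = ∫⁻ w, K w * ∫⁻ x, ‖f (x + w) - f x‖ₑ ^ p ∂μ ∂μ :=
        lintegral_congr fun w ↦
          lintegral_const_mul _ (hincrement.comp measurable_prodMk_right)
    _ ≤ ∫⁻ w, K w * (‖w‖ₑ ^ p * ∫⁻ x, ‖fderiv ℝ f x‖ₑ ^ p ∂μ) ∂μ :=
        lintegral_mono fun w ↦
          mul_le_mul_right (lintegral_rpow_enorm_translate_sub_le hf hp w) _
    _ = (∫⁻ w, K w * ‖w‖ₑ ^ p ∂μ) * ∫⁻ x, ‖fderiv ℝ f x‖ₑ ^ p ∂μ := by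
        simp only [← mul_assoc]
        exact lintegral_mul_const'' _ (hK.mul (measurable_enorm.pow_const p).aemeasurable)

lemma integral_kernel_mul_rpow_norm_sub_le [SecondCountableTopology E] {K : E → ℝ}
    (hK : AEMeasurable K μ) (hK_nonneg : 0 ≤ K) (hf : ContDiff ℝ 1 f) (hp : 1 ≤ p)
    (hmoment : Integrable (fun w ↦ K w * ‖w‖ ^ p) μ)
    (hfderiv : Integrable (fun x ↦ ‖fderiv ℝ f x‖ ^ p) μ) :
    ∫ x, ∫ y, K (y - x) * ‖f y - f x‖ ^ p ∂μ ∂μ ≤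
      (∫ w, K w * ‖w‖ ^ p ∂μ) * ∫ x, ‖fderiv ℝ f x‖ ^ p ∂μ := by
  have hp_nonneg : 0 ≤ p := zero_le_one.trans hp
  have moment_nonneg : 0 ≤ fun w ↦ K w * ‖w‖ ^ p :=
    fun w ↦ mul_nonneg (hK_nonneg w) (by positivity)
  have fderiv_nonneg : 0 ≤ fun x ↦ ‖fderiv ℝ f x‖ ^ p := fun x ↦ by positivity
  have henorm : ‖∫ x, ∫ y, K (y - x) * ‖f y - f x‖ ^ p ∂μ ∂μ‖ₑ ≤
      ‖(∫ w, K w * ‖w‖ ^ p ∂μ) * ∫ x, ‖fderiv ℝ f x‖ ^ p ∂μ‖ₑ := by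
    calc ‖∫ x, ∫ y, K (y - x) * ‖f y - f x‖ ^ p ∂μ ∂μ‖ₑ
        ≤ ∫⁻ x, ∫⁻ y, ‖K (y - x) * ‖f y - f x‖ ^ p‖ₑ ∂μ ∂μ :=
          (enorm_integral_le_lintegral_enorm _).trans
            (lintegral_mono fun x ↦ enorm_integral_le_lintegral_enorm _)
      _ ≤ (∫⁻ w, ‖K w * ‖w‖ ^ p‖ₑ ∂μ) * ∫⁻ x, ‖‖fderiv ℝ f x‖ ^ p‖ₑ ∂μ := by
          simpa only [enorm_mul, enorm_rpow_norm _ hp_nonneg] using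
            lintegral_kernel_mul_rpow_enorm_sub_le hK.enorm hf hp
      _ = ‖(∫ w, K w * ‖w‖ ^ p ∂μ) * ∫ x, ‖fderiv ℝ f x‖ ^ p ∂μ‖ₑ := by
          rw [enorm_mul, enorm_integral_of_nonneg hmoment moment_nonneg,
            enorm_integral_of_nonneg hfderiv fderiv_nonneg]
  calc ∫ x, ∫ y, K (y - x) * ‖f y - f x‖ ^ p ∂μ ∂μ
      ≤ ‖∫ x, ∫ y, K (y - x) * ‖f y - f x‖ ^ p ∂μ ∂μ‖ := Real.le_norm_self _
    _ ≤ ‖(∫ w, K w * ‖w‖ ^ p ∂μ) * ∫ x, ‖fderiv ℝ f x‖ ^ p ∂μ‖ := enorm_le_iff_norm_le.1 henorm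
    _ = (∫ w, K w * ‖w‖ ^ p ∂μ) * ∫ x, ‖fderiv ℝ f x‖ ^ p ∂μ :=
        Real.norm_of_nonneg
          (mul_nonneg (integral_nonneg moment_nonneg) (integral_nonneg fderiv_nonneg))

lemma integrable_rpow_norm_fderiv_of_hasCompactSupport {ν : Measure E}
    [IsFiniteMeasureOnCompacts ν] (hf : ContDiff ℝ 1 f) (hsupp : HasCompactSupport f)
    (hp : 0 < p) : Integrable (fun x ↦ ‖fderiv ℝ f x‖ ^ p) ν :=
  ((hf.continuous_fderiv one_ne_zero).norm.rpow_const fun _ ↦ .inr hp.le)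
    |>.integrable_of_hasCompactSupport <|
      (hsupp.fderiv (𝕜 := ℝ)).comp_left (g := fun L ↦ ‖L‖ ^ p) (by simp [hp.ne'])

end Translation

section HeatKernel

open Module

variable {E : Type*} [NormedAddCommGroup E] [NormedSpace ℝ E]

/-- The Gauss–Weierstrass kernel at time `t` as a function of the displacement, so that
`p_t(x, y) = heatKernel t (x - y)`. Only the norm and the dimension of `E` enter, so `E` need not
be Euclidean. -/
noncomputable def heatKernel (t : ℝ) (z : E) : ℝ :=
  (4 * π * t) ^ (-(finrank ℝ E : ℝ) / 2) * exp (-‖z‖ ^ 2 / (4 * t))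

lemma heatKernel_nonneg {t : ℝ} (ht : 0 ≤ t) (z : E) : 0 ≤ heatKernel t z := by
  unfold heatKernel
  positivity

lemma heatKernel_sub_comm (t : ℝ) (x y : E) : heatKernel t (x - y) = heatKernel t (y - x) := by
  simp only [heatKernel, norm_sub_rev x y]

lemma continuous_heatKernel (t : ℝ) : Continuous (heatKernel t : E → ℝ) := by
  unfold heatKernel
  fun_prop

lemma heatKernel_sqrt_smul {t : ℝ} (ht : 0 < t) (z : E) :
    heatKernel t (√t • z) = (√t ^ finrank ℝ E)⁻¹ * heatKernel 1 z := by
  have hexponent : -‖√t • z‖ ^ 2 / (4 * t) = -‖z‖ ^ 2 / (4 * 1) := by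
    rw [norm_smul, mul_pow, Real.norm_of_nonneg (sqrt_nonneg t), sq_sqrt ht.le]
    field_simp
  have hfactor : t ^ (-(finrank ℝ E : ℝ) / 2) = (√t ^ finrank ℝ E)⁻¹ := by
    rw [sqrt_eq_rpow, ← rpow_natCast, ← rpow_mul ht.le, ← rpow_neg ht.le]
    ring_nf
  simp only [heatKernel, hexponent, mul_rpow (by positivity : 0 ≤ 4 * π) ht.le, hfactor, mul_one]
  ring

variable [FiniteDimensional ℝ E] [MeasurableSpace E] [BorelSpace E] (μ : Measure E)
  [μ.IsAddHaarMeasure] {t p : ℝ}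

lemma integrable_heatKernel_mul_rpow_norm (ht : 0 < t) (hp : -(finrank ℝ E : ℝ) < p) :
    Integrable (fun w ↦ heatKernel t w * ‖w‖ ^ p) μ := by
  cases subsingleton_or_nontrivial E
  · exact .of_finite
  have hdim : ((finrank ℝ E - 1 : ℕ) : ℝ) = finrank ℝ E - 1 := Nat.cast_pred finrank_pos
  have hradial : IntegrableOn
      (fun r : ℝ ↦ r ^ (finrank ℝ E - 1) • (exp (-(4 * t)⁻¹ * r ^ 2) * r ^ p)) (Set.Ioi 0) := by
    refine (integrableOn_rpow_mul_exp_neg_mul_sq (b := (4 * t)⁻¹) (s := finrank ℝ E - 1 + p)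
      (by positivity) (by linarith)).congr_fun (fun r (hr : 0 < r) ↦ ?_) measurableSet_Ioi
    simp only [smul_eq_mul]
    rw [rpow_add hr, ← hdim, rpow_natCast]
    ring
  refine (((integrable_fun_norm_addHaar μ).2 hradial).const_mul
    ((4 * π * t) ^ (-(finrank ℝ E : ℝ) / 2))).congr (.of_forall fun w ↦ ?_)
  simp only [heatKernel, div_eq_inv_mul, mul_neg, neg_mul, mul_assoc]

lemma integral_heatKernel_mul_rpow_norm (ht : 0 < t) :
    ∫ w, heatKernel t w * ‖w‖ ^ p ∂μ = t ^ (p / 2) * ∫ z, heatKernel 1 z * ‖z‖ ^ p ∂μ := by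
  have hnorm (z : E) : ‖√t • z‖ ^ p = t ^ (p / 2) * ‖z‖ ^ p := by
    rw [norm_smul, Real.norm_of_nonneg (sqrt_nonneg t), mul_rpow (sqrt_nonneg t) (norm_nonneg z),
      sqrt_eq_rpow, ← rpow_mul ht.le, one_div_mul_eq_div]
  have hvolume : √t ^ finrank ℝ E ≠ 0 := (pow_pos (sqrt_pos.2 ht) _).ne'
  calc ∫ w, heatKernel t w * ‖w‖ ^ p ∂μ
      = √t ^ finrank ℝ E * ∫ z, heatKernel t (√t • z) * ‖√t • z‖ ^ p ∂μ := by
        rw [Measure.integral_comp_smul_of_nonneg μ (fun w ↦ heatKernel t w * ‖w‖ ^ p) √t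
          (hR := sqrt_nonneg t), smul_eq_mul, mul_inv_cancel_left₀ hvolume]
    _ = √t ^ finrank ℝ E *
          ∫ z, (√t ^ finrank ℝ E)⁻¹ * t ^ (p / 2) * (heatKernel 1 z * ‖z‖ ^ p) ∂μ := by
        simp only [heatKernel_sqrt_smul ht, hnorm, mul_mul_mul_comm]
    _ = t ^ (p / 2) * ∫ z, heatKernel 1 z * ‖z‖ ^ p ∂μ := by
        rw [integral_const_mul, mul_assoc, mul_inv_cancel_left₀ hvolume]

theorem heat_difference_quotient_bound_general {F : Type*} [NormedAddCommGroup F]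
    [NormedSpace ℝ F] {f : E → F} (hf : ContDiff ℝ 1 f) (hp : 1 ≤ p)
    (hfderiv : Integrable (fun x ↦ ‖fderiv ℝ f x‖ ^ p) μ) (ht : 0 < t) :
    t ^ (-(p / 2)) * ∫ x, ∫ y, heatKernel t (x - y) * ‖f y - f x‖ ^ p ∂μ ∂μ ≤
      (∫ z, heatKernel 1 z * ‖z‖ ^ p ∂μ) * ∫ x, ‖fderiv ℝ f x‖ ^ p ∂μ := by
  have hmoment : Integrable (fun w ↦ heatKernel t w * ‖w‖ ^ p) μ :=
    integrable_heatKernel_mul_rpow_norm μ ht (by linarith [(finrank ℝ E).cast_nonneg (α := ℝ)])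
  rw [rpow_neg ht.le, inv_mul_le_iff₀ (by positivity), ← mul_assoc,
    ← integral_heatKernel_mul_rpow_norm μ ht]
  simpa only [heatKernel_sub_comm t] using integral_kernel_mul_rpow_norm_sub_le
    (continuous_heatKernel t).aemeasurable (heatKernel_nonneg ht.le) hf hp hmoment hfderiv

end HeatKernel

theorem heat_difference_quotient_bound (n : ℕ) (hn : 1 ≤ n) (p : ℝ) (hp : 1 ≤ p)
    (f : EuclideanSpace ℝ (Fin n) → ℝ) (hf : ContDiff ℝ (⊤ : ℕ∞) f)
    (hsupp : HasCompactSupport f) (t : ℝ) (ht : 0 < t) :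
    t ^ (-(p / 2)) *
      ∫ x, ∫ y,
        (4 * π * t) ^ (-(n : ℝ) / 2) * Real.exp (-‖x - y‖ ^ 2 / (4 * t)) * |f y - f x| ^ p
      ≤ (∫ z : EuclideanSpace ℝ (Fin n),
            (4 * π) ^ (-(n : ℝ) / 2) * Real.exp (-‖z‖ ^ 2 / 4) * ‖z‖ ^ p) *
          ∫ x, ‖fderiv ℝ f x‖ ^ p := by
  have hf₁ : ContDiff ℝ 1 f := hf.of_le (by simp)
  simpa only [heatKernel, finrank_euclideanSpace_fin, mul_one, Real.norm_eq_abs] using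
    heat_difference_quotient_bound_general volume hf₁ hp
      (integrable_rpow_norm_fderiv_of_hasCompactSupport hf₁ hsupp (by linarith)) ht
end

section
/- Let n ≥ 1, 1 ≤ p < ∞, and let f : ℝⁿ → ℝ be smooth with compact support. Then lim_{s → 1⁻} (1−s) ∫_{ℝⁿ} ∫_{ℝⁿ} |f(x) − f(y)|^p / ‖x−y‖^{n+sp} dy dx = (2 π^{(n-1)/2} Γ((p+1)/2) / (p Γ((n+p)/2))) ∫_{ℝⁿ} ‖∇f(x)‖^p dx. -/
open Real MeasureTheory Filter Topology
open scoped ENNReal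

/-!
Translation invariance and polar coordinates write the Gagliardo energy of order `s` as
`∫_0^∞ r ^ (-1 - s p) G(r) dr`, where `G(r)` is the integral of `‖f(x + r ω) - f(x)‖ ^ p` over all
points `x` and unit vectors `ω`. The measure `(1 - s) p r ^ (p (1 - s) - 1) dr` on `(0, 1)` is the
image of Lebesgue measure under `t ↦ t ^ (1 / (p (1 - s)))`, so it concentrates at `0` as `s → 1`,
and `1 - s` times the energy tends to `1 / p` times the limit of `G(r) / r ^ p` at `0`. By
Rademacher's theorem and dominated convergence that limit is the integral of `‖Df(x) ω‖ ^ p` over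
`x` and `ω`. Integrating over `ω` first leaves `‖Df(x)‖ ^ p` times a spherical moment, which is
found by evaluating `∫ |v(x)| ^ p exp(-‖x‖²) dx` for a linear form `v` both in polar coordinates
and as a product of one-dimensional integrals.
-/

section Abelian

open Set

lemma lintegral_Ioo_rpow_mul {ε : ℝ} (hε : 0 < ε) (g : ℝ → ℝ≥0∞) :
    ∫⁻ r in Ioo (0 : ℝ) 1, ENNReal.ofReal (ε * r ^ (ε - 1)) * g r =
      ∫⁻ t in Ioo (0 : ℝ) 1, g (t ^ ε⁻¹) := by
  have rpow_leftInvOn : LeftInvOn (fun t : ℝ => t ^ ε⁻¹) (fun r : ℝ => r ^ ε) (Ioo 0 1) :=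
    fun r hr => rpow_rpow_inv hr.1.le hε.ne'
  have rpow_image : (fun r : ℝ => r ^ ε) '' Ioo 0 1 = Ioo 0 1 := by
    refine Subset.antisymm ?_ fun t ht => ⟨t ^ ε⁻¹, ?_, rpow_inv_rpow ht.1.le hε.ne'⟩
    · rintro _ ⟨r, hr, rfl⟩
      exact ⟨rpow_pos_of_pos hr.1 ε, rpow_lt_one hr.1.le hr.2 hε⟩
    · exact ⟨rpow_pos_of_pos ht.1 _, rpow_lt_one ht.1.le ht.2 (inv_pos.2 hε)⟩
  have change_of_variables := lintegral_image_eq_lintegral_abs_deriv_mul measurableSet_Ioo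
    (fun r hr => (hasDerivAt_rpow_const (p := ε) (.inl hr.1.ne')).hasDerivWithinAt)
    rpow_leftInvOn.injOn fun t => g (t ^ ε⁻¹)
  rw [rpow_image] at change_of_variables
  rw [change_of_variables]
  refine setLIntegral_congr_fun measurableSet_Ioo fun r hr => ?_
  have := hr.1
  have hinv : (r ^ ε) ^ ε⁻¹ = r := rpow_leftInvOn hr
  simp only [hinv, abs_of_nonneg (show 0 ≤ ε * r ^ (ε - 1) by positivity)]

lemma tendsto_rpow_inv_nhdsGT_zero {t : ℝ} (ht : t ∈ Ioo (0 : ℝ) 1) :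
    Tendsto (fun ε : ℝ => t ^ ε⁻¹) (𝓝[>] 0) (𝓝[>] 0) :=
  tendsto_nhdsWithin_iff.2
    ⟨(tendsto_rpow_atTop_of_base_lt_one t (by linarith [ht.1]) ht.2).comp tendsto_inv_nhdsGT_zero,
      .of_forall fun _ => rpow_pos_of_pos ht.1 _⟩

lemma tendsto_lintegral_Ioo_rpow_mul {g : ℝ → ℝ≥0∞} (hg : Measurable g) {A C : ℝ≥0∞}
    (hC : C ≠ ∞) (hgC : ∀ r ∈ Ioo (0 : ℝ) 1, g r ≤ C) (hgA : Tendsto g (𝓝[>] 0) (𝓝 A)) :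
    Tendsto (fun ε : ℝ => ∫⁻ r in Ioo (0 : ℝ) 1, ENNReal.ofReal (ε * r ^ (ε - 1)) * g r)
      (𝓝[>] 0) (𝓝 A) := by
  have dominated : Tendsto (fun ε : ℝ => ∫⁻ t in Ioo (0 : ℝ) 1, g (t ^ ε⁻¹)) (𝓝[>] 0)
      (𝓝 (∫⁻ _ in Ioo (0 : ℝ) 1, A)) := by
    refine tendsto_lintegral_filter_of_dominated_convergence (fun _ => C)
      (.of_forall fun ε => by fun_prop) ?_ (by simpa using hC) ?_
    · filter_upwards [self_mem_nhdsWithin] with ε hε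
      filter_upwards [ae_restrict_mem measurableSet_Ioo] with t ht
      exact hgC _ ⟨rpow_pos_of_pos ht.1 _, rpow_lt_one ht.1.le ht.2 (inv_pos.2 hε)⟩
    · filter_upwards [ae_restrict_mem measurableSet_Ioo] with t ht
      exact hgA.comp (tendsto_rpow_inv_nhdsGT_zero ht)
  simp only [setLIntegral_const, volume_Ioo, sub_zero, ENNReal.ofReal_one, mul_one] at dominated
  refine dominated.congr' ?_
  filter_upwards [self_mem_nhdsWithin] with ε hε
  exact (lintegral_Ioo_rpow_mul hε g).symm

lemma lintegral_Ioi_one_rpow_neg_one_sub {a : ℝ} (ha : 0 < a) :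
    ∫⁻ r in Ioi (1 : ℝ), ENNReal.ofReal (r ^ (-1 - a)) = ENNReal.ofReal a⁻¹ := by
  have hlt : -1 - a < -1 := by linarith
  rw [← ofReal_integral_eq_lintegral_ofReal (integrableOn_Ioi_rpow_of_lt hlt one_pos),
    integral_Ioi_rpow_of_lt hlt one_pos]
  · congr 1
    rw [one_rpow, show -1 - a + 1 = -a by ring, neg_div_neg_eq, one_div]
  · filter_upwards [ae_restrict_mem measurableSet_Ioi] with r hr
    exact rpow_nonneg (zero_le_one.trans (mem_Ioi.1 hr).le) _

variable {p : ℝ} {G : ℝ → ℝ≥0∞} {A C : ℝ≥0∞}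

lemma tendsto_one_sub_mul_lintegral_Ioi_one_rpow_mul (hp : 0 < p) (hC : C ≠ ∞)
    (hGC : ∀ r, G r ≤ C) :
    Tendsto (fun s : ℝ => ENNReal.ofReal (1 - s) *
      ∫⁻ r in Ioi (1 : ℝ), ENNReal.ofReal (r ^ (-1 - s * p)) * G r) (𝓝[<] 1) (𝓝 0) := by
  have bound_tendsto : Tendsto (fun s : ℝ => ENNReal.ofReal ((1 - s) * (s * p)⁻¹) * C)
      (𝓝[<] 1) (𝓝 0) := by
    have hreal : Tendsto (fun s : ℝ => (1 - s) * (s * p)⁻¹) (𝓝 1) (𝓝 ((1 - 1) * (1 * p)⁻¹)) :=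
      ContinuousAt.tendsto (by fun_prop (disch := simpa using hp.ne'))
    simpa using ENNReal.Tendsto.mul_const
      (ENNReal.tendsto_ofReal (hreal.mono_left nhdsWithin_le_nhds)) (.inr hC)
  refine tendsto_of_tendsto_of_tendsto_of_le_of_le' tendsto_const_nhds bound_tendsto
    (.of_forall fun _ => zero_le) ?_
  filter_upwards [Ioo_mem_nhdsLT one_pos] with s hs
  calc ENNReal.ofReal (1 - s) * ∫⁻ r in Ioi (1 : ℝ), ENNReal.ofReal (r ^ (-1 - s * p)) * G r
      ≤ ENNReal.ofReal (1 - s) * ∫⁻ r in Ioi (1 : ℝ), ENNReal.ofReal (r ^ (-1 - s * p)) * C := by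
        gcongr with r
        exact hGC r
    _ = ENNReal.ofReal ((1 - s) * (s * p)⁻¹) * C := by
        rw [lintegral_mul_const _ (by fun_prop),
          lintegral_Ioi_one_rpow_neg_one_sub (mul_pos hs.1 hp), ← mul_assoc,
          ENNReal.ofReal_mul (sub_nonneg.2 hs.2.le)]

lemma tendsto_one_sub_mul_lintegral_Ioo_rpow_mul (hp : 0 < p) (hG : Measurable G) (hC : C ≠ ∞)
    (hGC : ∀ r ∈ Ioo (0 : ℝ) 1, G r / ENNReal.ofReal r ^ p ≤ C)
    (hGA : Tendsto (fun r => G r / ENNReal.ofReal r ^ p) (𝓝[>] 0) (𝓝 A)) :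
    Tendsto (fun s : ℝ => ENNReal.ofReal (1 - s) *
      ∫⁻ r in Ioo (0 : ℝ) 1, ENNReal.ofReal (r ^ (-1 - s * p)) * G r) (𝓝[<] 1)
      (𝓝 (ENNReal.ofReal p⁻¹ * A)) := by
  have exponent_tendsto : Tendsto (fun s : ℝ => p * (1 - s)) (𝓝[<] 1) (𝓝[>] 0) := by
    refine tendsto_nhdsWithin_iff.2 ⟨?_, ?_⟩
    · exact (Continuous.tendsto' (by fun_prop) _ _ (by simp)).mono_left nhdsWithin_le_nhds
    · filter_upwards [self_mem_nhdsWithin] with s hs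
      exact mul_pos hp (sub_pos.2 hs)
  refine (ENNReal.Tendsto.const_mul ((tendsto_lintegral_Ioo_rpow_mul (by fun_prop) hC hGC hGA).comp
    exponent_tendsto) (.inr ENNReal.ofReal_ne_top)).congr fun s => ?_
  rw [Function.comp_apply, ← lintegral_const_mul _ (by fun_prop),
    ← lintegral_const_mul _ (by fun_prop)]
  refine setLIntegral_congr_fun measurableSet_Ioo fun r hr => ?_
  have hr0 : 0 < r := hr.1
  have rpow_split : p⁻¹ * (p * (1 - s) * r ^ (p * (1 - s) - 1)) =
      (1 - s) * r ^ (-1 - s * p) * r ^ p := by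
    rw [mul_assoc (1 - s), ← rpow_add hr0, show -1 - s * p + p = p * (1 - s) - 1 by ring]
    field_simp
  have hrp : ENNReal.ofReal (r ^ p) ≠ 0 := by simpa using rpow_pos_of_pos hr0 p
  rw [← mul_assoc, ← ENNReal.ofReal_mul (by positivity), rpow_split,
    ENNReal.ofReal_mul' (by positivity), ENNReal.ofReal_mul' (by positivity),
    ENNReal.ofReal_rpow_of_pos hr0, mul_assoc, ENNReal.mul_div_cancel hrp ENNReal.ofReal_ne_top,
    mul_assoc]

lemma tendsto_one_sub_mul_lintegral_Ioi_rpow_mul (hp : 0 < p) (hG : Measurable G)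
    {C₀ : ℝ≥0∞} (hC : C ≠ ∞) (hGC : ∀ r, G r ≤ C) (hC₀ : C₀ ≠ ∞)
    (hGC₀ : ∀ r ∈ Ioo (0 : ℝ) 1, G r / ENNReal.ofReal r ^ p ≤ C₀)
    (hGA : Tendsto (fun r => G r / ENNReal.ofReal r ^ p) (𝓝[>] 0) (𝓝 A)) :
    Tendsto (fun s : ℝ => ENNReal.ofReal (1 - s) *
      ∫⁻ r in Ioi (0 : ℝ), ENNReal.ofReal (r ^ (-1 - s * p)) * G r) (𝓝[<] 1)
      (𝓝 (ENNReal.ofReal p⁻¹ * A)) := by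
  have split_at_one (h : ℝ → ℝ≥0∞) :
      ∫⁻ r in Ioi (0 : ℝ), h r = (∫⁻ r in Ioo (0 : ℝ) 1, h r) + ∫⁻ r in Ioi (1 : ℝ), h r := by
    rw [← Ioc_union_Ioi_eq_Ioi zero_le_one,
      lintegral_union measurableSet_Ioi (Ioc_disjoint_Ioi le_rfl),
      setLIntegral_congr Ioo_ae_eq_Ioc.symm]
  simp only [split_at_one, mul_add]
  simpa only [add_zero] using (tendsto_one_sub_mul_lintegral_Ioo_rpow_mul hp hG hC₀ hGC₀ hGA).add
    (tendsto_one_sub_mul_lintegral_Ioi_one_rpow_mul hp hC hGC)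

end Abelian

section Polar

open Module Metric Set

lemma lintegral_volumeIoiPow (k : ℕ) {g : ℝ → ℝ≥0∞} (hg : Measurable g) :
    ∫⁻ r : Ioi (0 : ℝ), g r ∂(.volumeIoiPow k) =
      ∫⁻ r in Ioi (0 : ℝ), ENNReal.ofReal (r ^ k) * g r := by
  rw [Measure.volumeIoiPow, lintegral_withDensity_eq_lintegral_mul _ (by fun_prop) (by fun_prop)]
  exact lintegral_subtype_comap measurableSet_Ioi fun r : ℝ => ENNReal.ofReal (r ^ k) * g r

lemma lintegral_Ioi_rpow_mul_exp_neg_sq {q : ℝ} (hq : -1 < q) :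
    ∫⁻ r in Ioi (0 : ℝ), ENNReal.ofReal (r ^ q * exp (-r ^ 2)) =
      ENNReal.ofReal (Gamma ((q + 1) / 2) / 2) := by
  have hint := integrableOn_rpow_mul_exp_neg_rpow hq two_pos
  have hval := integral_rpow_mul_exp_neg_rpow two_pos hq
  simp only [rpow_two] at hint hval
  rw [← ofReal_integral_eq_lintegral_ofReal hint, hval, one_div_mul_eq_div]
  filter_upwards [ae_restrict_mem measurableSet_Ioi] with r hr
  exact mul_nonneg (rpow_nonneg (mem_Ioi.1 hr).le _) (exp_nonneg _)

variable {E : Type*} [NormedAddCommGroup E] [NormedSpace ℝ E] [FiniteDimensional ℝ E]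
  [Nontrivial E] [MeasurableSpace E] [BorelSpace E] (μ : Measure E) [μ.IsAddHaarMeasure]

lemma lintegral_eq_lintegral_Ioi_lintegral_sphere {g : E → ℝ≥0∞} (hg : Measurable g) :
    ∫⁻ x, g x ∂μ = ∫⁻ r in Ioi (0 : ℝ), ENNReal.ofReal (r ^ (finrank ℝ E - 1)) *
      ∫⁻ ω : sphere (0 : E) 1, g (r • (ω : E)) ∂μ.toSphere := by
  have hgq : Measurable fun q : sphere (0 : E) 1 × Ioi (0 : ℝ) => g ((q.2 : ℝ) • (q.1 : E)) := by
    fun_prop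
  calc ∫⁻ x, g x ∂μ = ∫⁻ x : ({0}ᶜ : Set E), g x ∂(μ.comap (↑)) := by
        rw [lintegral_subtype_comap (measurableSet_singleton _).compl, restrict_compl_singleton]
    _ = ∫⁻ q : sphere (0 : E) 1 × Ioi (0 : ℝ), g ((q.2 : ℝ) • (q.1 : E))
        ∂(μ.toSphere.prod (.volumeIoiPow (finrank ℝ E - 1))) := by
        rw [← μ.measurePreserving_homeomorphUnitSphereProd.lintegral_comp hgq]
        refine lintegral_congr fun x => ?_
        simp [smul_smul, norm_ne_zero_iff.2 x.2]
    _ = _ := by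
        rw [lintegral_prod_symm _ hgq.aemeasurable]
        refine lintegral_volumeIoiPow _
          (g := fun r => ∫⁻ ω : sphere (0 : E) 1, g (r • (ω : E)) ∂μ.toSphere) ?_
        exact Measurable.lintegral_prod_right'
          (f := fun q : ℝ × sphere (0 : E) 1 => g (q.1 • (q.2 : E))) (by fun_prop)

variable {F : Type*} [NormedAddCommGroup F] [NormedSpace ℝ F]

lemma lintegral_enorm_clm_rpow_mul_exp_neg_norm_sq_eq_lintegral_sphere {p : ℝ} (hp : 0 ≤ p)
    (v : E →L[ℝ] F) :
    ∫⁻ x, ‖v x‖ₑ ^ p * ENNReal.ofReal (exp (-‖x‖ ^ 2)) ∂μ =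
      ENNReal.ofReal (Gamma ((finrank ℝ E + p) / 2) / 2) *
        ∫⁻ ω : sphere (0 : E) 1, ‖v ω‖ₑ ^ p ∂μ.toSphere := by
  have hv : Measurable fun x => ‖v x‖ₑ ^ p := v.continuous.enorm.measurable.pow_const p
  have hv_exp : Measurable fun x => ‖v x‖ₑ ^ p * ENNReal.ofReal (exp (-‖x‖ ^ 2)) :=
    hv.mul (by fun_prop)
  have hdim : 1 ≤ finrank ℝ E := finrank_pos
  have hq : -1 < (finrank ℝ E : ℝ) - 1 + p := by
    have : (1 : ℝ) ≤ finrank ℝ E := mod_cast hdim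
    linarith
  have radial := lintegral_Ioi_rpow_mul_exp_neg_sq hq
  rw [show (finrank ℝ E : ℝ) - 1 + p + 1 = finrank ℝ E + p by ring] at radial
  rw [lintegral_eq_lintegral_Ioi_lintegral_sphere μ hv_exp, ← radial,
    ← lintegral_mul_const _ (by fun_prop)]
  refine setLIntegral_congr_fun measurableSet_Ioi fun r (hr : 0 < r) => ?_
  have integrand (ω : sphere (0 : E) 1) :
      ‖v (r • (ω : E))‖ₑ ^ p * ENNReal.ofReal (exp (-‖r • (ω : E)‖ ^ 2)) =
        ENNReal.ofReal (r ^ p * exp (-r ^ 2)) * ‖v ω‖ₑ ^ p := by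
    rw [map_smul, enorm_smul, ENNReal.mul_rpow_of_nonneg _ _ hp, Real.enorm_of_nonneg hr.le,
      ENNReal.ofReal_rpow_of_pos hr, norm_smul, norm_eq_of_mem_sphere, mul_one,
      norm_of_nonneg hr.le, ENNReal.ofReal_mul (by positivity)]
    ring
  simp only [integrand]
  rw [lintegral_const_mul' _ _ ENNReal.ofReal_ne_top, ← mul_assoc,
    ← ENNReal.ofReal_mul (by positivity), ← mul_assoc, rpow_add hr, ← Nat.cast_pred hdim,
    rpow_natCast]

end Polar

section GaussianMoment

open Module Metric

lemma integral_abs_rpow_mul_exp_neg_sq {q : ℝ} (hq : -1 < q) :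
    ∫ r : ℝ, |r| ^ q * exp (-r ^ 2) = Gamma ((q + 1) / 2) := by
  have hval := integral_rpow_mul_exp_neg_rpow two_pos hq
  have hsymm := integral_comp_abs (f := fun r : ℝ => r ^ q * exp (-r ^ 2))
  simp only [rpow_two, sq_abs] at hval hsymm
  rw [hsymm, hval]
  ring

lemma integrable_abs_rpow_mul_exp_neg_sq {q : ℝ} (hq : -1 < q) :
    Integrable fun r : ℝ => |r| ^ q * exp (-r ^ 2) := by
  refine .of_integral_ne_zero ?_
  rw [integral_abs_rpow_mul_exp_neg_sq hq]
  exact (Gamma_pos_of_pos (by linarith)).ne'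

variable {ι : Type*} [Fintype ι]

lemma abs_coord_rpow_mul_exp_neg_norm_sq [DecidableEq ι] (p : ℝ) (i : ι) (x : ι → ℝ) :
    |x i| ^ p * exp (-‖WithLp.toLp 2 x‖ ^ 2) =
      ∏ j, |x j| ^ ((Pi.single i p : ι → ℝ) j) * exp (-x j ^ 2) := by
  have coord_factor : ∏ j, |x j| ^ ((Pi.single i p : ι → ℝ) j) = |x i| ^ p := by
    rw [Finset.prod_eq_single i (fun j _ hj => by simp [hj]) (by simp), Pi.single_eq_same]
  rw [Finset.prod_mul_distrib, coord_factor, ← exp_sum, Finset.sum_neg_distrib,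
    EuclideanSpace.norm_sq_eq]
  simp

lemma lintegral_abs_coord_rpow_mul_exp_neg_norm_sq {p : ℝ} (hp : -1 < p) (i : ι) :
    ∫⁻ x : EuclideanSpace ℝ ι, ENNReal.ofReal (|x i| ^ p * exp (-‖x‖ ^ 2)) =
      ENNReal.ofReal (π ^ (((Fintype.card ι : ℝ) - 1) / 2) * Gamma ((p + 1) / 2)) := by
  classical
  have hexp (j : ι) : -1 < (Pi.single i p : ι → ℝ) j := by
    obtain rfl | hj := eq_or_ne j i
    · simpa using hp
    · simp [hj]
  have gamma_prod : ∏ j, Gamma (((Pi.single i p : ι → ℝ) j + 1) / 2) =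
      π ^ (((Fintype.card ι : ℝ) - 1) / 2) * Gamma ((p + 1) / 2) := by
    have hcard : 1 ≤ Fintype.card ι := Fintype.card_pos_iff.2 ⟨i⟩
    rw [← Finset.prod_erase_mul _ _ (Finset.mem_univ i), Pi.single_eq_same,
      Finset.prod_congr rfl (g := fun _ => √π) fun j hj => by
        rw [Pi.single_eq_of_ne (Finset.ne_of_mem_erase hj), zero_add, Gamma_one_half_eq],
      Finset.prod_const, Finset.card_erase_of_mem (Finset.mem_univ i), Finset.card_univ,
      ← Nat.cast_pred hcard, sqrt_eq_rpow, ← rpow_natCast, ← rpow_mul pi_pos.le,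
      one_div_mul_eq_div]
  rw [← (PiLp.volume_preserving_toLp ι).lintegral_comp (by fun_prop)]
  simp only [abs_coord_rpow_mul_exp_neg_norm_sq]
  rw [← ofReal_integral_eq_lintegral_ofReal, integral_fintype_prod_volume_eq_prod
    fun j t => |t| ^ (Pi.single i p : ι → ℝ) j * exp (-t ^ 2)]
  · simp only [integral_abs_rpow_mul_exp_neg_sq (hexp _), gamma_prod]
  · exact Integrable.fintype_prod fun j => integrable_abs_rpow_mul_exp_neg_sq (hexp j)
  · exact .of_forall fun x => Finset.prod_nonneg fun j _ => by positivity

variable {E : Type*} [NormedAddCommGroup E] [InnerProductSpace ℝ E] [FiniteDimensional ℝ E]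
  [Nontrivial E]

lemma exists_orthonormalBasis_dual_eq_norm_mul_repr (v : E →L[ℝ] ℝ) :
    ∃ (b : OrthonormalBasis (Fin (finrank ℝ E)) ℝ E) (i : Fin (finrank ℝ E)),
      ∀ x, v x = ‖v‖ * b.repr x i := by
  let i : Fin (finrank ℝ E) := ⟨0, finrank_pos⟩
  obtain rfl | hv := eq_or_ne v 0
  · exact ⟨stdOrthonormalBasis ℝ E, i, by simp⟩
  set w := (InnerProductSpace.toDual ℝ E).symm v with hw
  have hwn : ‖w‖ = ‖v‖ := by simp [hw]
  have unit_orthonormal : Orthonormal ℝ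
      (({i} : Set (Fin (finrank ℝ E))).domRestrict fun _ => ‖v‖⁻¹ • w) := by
    refine ⟨fun _ => ?_, fun j k hjk => (hjk (Subsingleton.elim j k)).elim⟩
    simp [norm_smul, hwn, hv]
  obtain ⟨b, hb⟩ := unit_orthonormal.exists_orthonormalBasis_extension_of_card_eq (by simp)
  refine ⟨b, i, fun x => ?_⟩
  rw [b.repr_apply_apply, hb i rfl, real_inner_smul_left, mul_inv_cancel_left₀ (by simpa using hv),
    hw, InnerProductSpace.toDual_symm_apply]

variable [MeasurableSpace E] [BorelSpace E]

lemma lintegral_enorm_dual_rpow_mul_exp_neg_norm_sq {p : ℝ} (hp : 0 ≤ p) (v : E →L[ℝ] ℝ) :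
    ∫⁻ x, ‖v x‖ₑ ^ p * ENNReal.ofReal (exp (-‖x‖ ^ 2)) =
      ENNReal.ofReal (π ^ (((finrank ℝ E : ℝ) - 1) / 2) * Gamma ((p + 1) / 2)) * ‖v‖ₑ ^ p := by
  obtain ⟨b, i, hbi⟩ := exists_orthonormalBasis_dual_eq_norm_mul_repr v
  have integrand (x : E) : ‖v x‖ₑ ^ p * ENNReal.ofReal (exp (-‖x‖ ^ 2)) =
      ENNReal.ofReal (|b.repr x i| ^ p * exp (-‖b.repr x‖ ^ 2)) * ‖v‖ₑ ^ p := by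
    rw [hbi, enorm_mul, enorm_norm, ENNReal.mul_rpow_of_nonneg _ _ hp, b.repr.norm_map,
      ENNReal.ofReal_mul (by positivity), ← ENNReal.ofReal_rpow_of_nonneg (abs_nonneg _) hp,
      ← norm_eq_abs, ofReal_norm]
    ring
  have coord_moment := lintegral_abs_coord_rpow_mul_exp_neg_norm_sq (p := p) (by linarith) i
  rw [Fintype.card_fin] at coord_moment
  simp only [integrand]
  rw [lintegral_mul_const _ (by fun_prop), b.measurePreserving_repr.lintegral_comp
    (f := fun y : EuclideanSpace ℝ (Fin (finrank ℝ E)) =>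
      ENNReal.ofReal (|y i| ^ p * exp (-‖y‖ ^ 2))) (by fun_prop), coord_moment]

/-- The closed form of the spherical moment `∫ |⟪e, ω⟫| ^ p dσ(ω)` over the unit sphere of a
Euclidean space of dimension `n`, where `e` is any unit vector. -/
noncomputable def sphereMoment (n : ℕ) (p : ℝ) : ℝ :=
  2 * π ^ (((n : ℝ) - 1) / 2) * Gamma ((p + 1) / 2) / Gamma ((n + p) / 2)

lemma lintegral_sphere_enorm_dual_rpow {p : ℝ} (hp : 0 ≤ p) (v : E →L[ℝ] ℝ) :
    ∫⁻ ω : sphere (0 : E) 1, ‖v ω‖ₑ ^ p ∂(volume : Measure E).toSphere =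
      ENNReal.ofReal (sphereMoment (finrank ℝ E) p) * ‖v‖ₑ ^ p := by
  have hdim : 0 < (finrank ℝ E : ℝ) := mod_cast finrank_pos
  have hΓ : 0 < Gamma ((finrank ℝ E + p) / 2) := Gamma_pos_of_pos (by positivity)
  have hΓ_ne : ENNReal.ofReal (Gamma ((finrank ℝ E + p) / 2) / 2) ≠ 0 := by simpa using hΓ
  have const_eq : ENNReal.ofReal (π ^ (((finrank ℝ E : ℝ) - 1) / 2) * Gamma ((p + 1) / 2)) =
      ENNReal.ofReal (Gamma ((finrank ℝ E + p) / 2) / 2) *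
        ENNReal.ofReal (sphereMoment (finrank ℝ E) p) := by
    rw [← ENNReal.ofReal_mul (by positivity), sphereMoment]
    congr 1
    field_simp
  rw [← ENNReal.mul_right_inj hΓ_ne ENNReal.ofReal_ne_top,
    ← lintegral_enorm_clm_rpow_mul_exp_neg_norm_sq_eq_lintegral_sphere volume hp v,
    lintegral_enorm_dual_rpow_mul_exp_neg_norm_sq hp v, const_eq, mul_assoc]

end GaussianMoment

section Gagliardo

open Module Metric Set

variable {E F : Type*} [NormedAddCommGroup E] [NormedSpace ℝ E] [MeasurableSpace E]
  [NormedAddCommGroup F] {p : ℝ}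

/-- The `p`-th power of the Gagliardo seminorm of order `s` of `f`, with respect to a measure
`μ`. For `p ≠ 0` the integrand is `0` on the diagonal `x = y`, also where its denominator is `0`. -/
noncomputable def gagliardoEnergy (μ : Measure E) (f : E → F) (p s : ℝ) : ℝ≥0∞ :=
  ∫⁻ x, ∫⁻ y, ENNReal.ofReal (‖f x - f y‖ ^ p / ‖x - y‖ ^ ((finrank ℝ E : ℝ) + s * p)) ∂μ ∂μ

/-- The spherical `L^p` modulus of continuity of `f`: the integral of `‖f (x + r • ω) - f x‖ ^ p`
over all points `x` and all unit vectors `ω`. -/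
noncomputable def sphereModulus (μ : Measure E) (f : E → F) (p r : ℝ) : ℝ≥0∞ :=
  ∫⁻ q : sphere (0 : E) 1 × E, ‖f (q.2 + r • (q.1 : E)) - f q.2‖ₑ ^ p ∂(μ.toSphere.prod μ)

variable [BorelSpace E] (μ : Measure E) [μ.IsAddHaarMeasure] {f : E → F}

lemma sphereModulus_le (hp : 0 ≤ p) (hf : Continuous f) (r : ℝ) :
    sphereModulus μ f p r ≤ μ.toSphere univ * (2 ^ p * (2 * ∫⁻ x, ‖f x‖ₑ ^ p ∂μ)) := by
  have hfp : Measurable fun x => ‖f x‖ₑ ^ p := hf.enorm.measurable.pow_const p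
  have translate_bound (ω : sphere (0 : E) 1) : ∫⁻ x, ‖f (x + r • (ω : E)) - f x‖ₑ ^ p ∂μ ≤
      2 ^ p * (2 * ∫⁻ x, ‖f x‖ₑ ^ p ∂μ) := by
    calc ∫⁻ x, ‖f (x + r • (ω : E)) - f x‖ₑ ^ p ∂μ
        ≤ ∫⁻ x, 2 ^ p * (‖f (x + r • (ω : E))‖ₑ ^ p + ‖f x‖ₑ ^ p) ∂μ := by
          refine lintegral_mono fun x => le_trans ?_
            (ENNReal.add_rpow_le_two_rpow_mul_rpow_add_rpow _ _ hp)
          gcongr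
          exact enorm_sub_le
      _ = 2 ^ p * (2 * ∫⁻ x, ‖f x‖ₑ ^ p ∂μ) := by
          rw [lintegral_const_mul _ (by fun_prop), lintegral_add_right _ hfp,
            lintegral_add_right_eq_self (fun x => ‖f x‖ₑ ^ p), two_mul]
  calc sphereModulus μ f p r
      ≤ ∫⁻ ω : sphere (0 : E) 1, ∫⁻ x, ‖f (x + r • (ω : E)) - f x‖ₑ ^ p ∂μ ∂μ.toSphere :=
        lintegral_prod_le _
    _ ≤ ∫⁻ _ : sphere (0 : E) 1, 2 ^ p * (2 * ∫⁻ x, ‖f x‖ₑ ^ p ∂μ) ∂μ.toSphere :=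
        lintegral_mono translate_bound
    _ = _ := by rw [lintegral_const, mul_comm]

variable [FiniteDimensional ℝ E]

lemma measurable_sphereModulus (hf : Continuous f) (p : ℝ) : Measurable (sphereModulus μ f p) := by
  refine Measurable.lintegral_prod_right' (f := fun w : ℝ × (sphere (0 : E) 1 × E) =>
    ‖f (w.2.2 + w.1 • (w.2.1 : E)) - f w.2.2‖ₑ ^ p) ?_
  have : Continuous fun w : ℝ × (sphere (0 : E) 1 × E) =>
    f (w.2.2 + w.1 • (w.2.1 : E)) - f w.2.2 := by fun_prop
  exact this.enorm.measurable.pow_const p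

lemma gagliardoEnergy_eq_lintegral_translate (hp : 0 ≤ p) (hf : Continuous f) (s : ℝ) :
    gagliardoEnergy μ f p s = ∫⁻ h, ENNReal.ofReal (‖h‖ ^ (-((finrank ℝ E : ℝ) + s * p))) *
      ∫⁻ x, ‖f (x + h) - f x‖ₑ ^ p ∂μ ∂μ := by
  have hdiff : Continuous fun w : E × E => f (w.1 + w.2) - f w.1 := by fun_prop
  have hmeas : Measurable fun w : E × E => ‖f (w.1 + w.2) - f w.1‖ₑ ^ p :=
    hdiff.enorm.measurable.pow_const p
  calc gagliardoEnergy μ f p s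
      = ∫⁻ x, ∫⁻ h, ENNReal.ofReal (‖h‖ ^ (-((finrank ℝ E : ℝ) + s * p))) *
          ‖f (x + h) - f x‖ₑ ^ p ∂μ ∂μ := by
        refine lintegral_congr fun x => ?_
        rw [← lintegral_add_left_eq_self _ x]
        refine lintegral_congr fun h => ?_
        rw [sub_add_cancel_left, norm_neg, norm_sub_rev, div_eq_inv_mul,
          ← rpow_neg (norm_nonneg h), ENNReal.ofReal_mul (by positivity),
          ← ENNReal.ofReal_rpow_of_nonneg (norm_nonneg _) hp, ofReal_norm]
    _ = ∫⁻ h, ∫⁻ x, ENNReal.ofReal (‖h‖ ^ (-((finrank ℝ E : ℝ) + s * p))) *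
          ‖f (x + h) - f x‖ₑ ^ p ∂μ ∂μ := by
        refine lintegral_lintegral_swap (Measurable.aemeasurable ?_)
        exact Measurable.mul (by fun_prop) hmeas
    _ = _ := lintegral_congr fun h => lintegral_const_mul _ (hmeas.comp measurable_prodMk_right)

lemma gagliardoEnergy_eq_lintegral_sphereModulus [Nontrivial E] (hp : 0 ≤ p) (hf : Continuous f)
    (s : ℝ) :
    gagliardoEnergy μ f p s =
      ∫⁻ r in Ioi (0 : ℝ), ENNReal.ofReal (r ^ (-1 - s * p)) * sphereModulus μ f p r := by
  have hdiff : Continuous fun w : E × E => f (w.2 + w.1) - f w.2 := by fun_prop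
  have hmeas : Measurable fun w : E × E => ‖f (w.2 + w.1) - f w.2‖ₑ ^ p :=
    hdiff.enorm.measurable.pow_const p
  have htranslate : Measurable fun h => ENNReal.ofReal (‖h‖ ^ (-((finrank ℝ E : ℝ) + s * p))) *
      ∫⁻ x, ‖f (x + h) - f x‖ₑ ^ p ∂μ := Measurable.mul (by fun_prop) hmeas.lintegral_prod_right'
  rw [gagliardoEnergy_eq_lintegral_translate μ hp hf,
    lintegral_eq_lintegral_Ioi_lintegral_sphere μ htranslate]
  refine setLIntegral_congr_fun measurableSet_Ioi fun r (hr : 0 < r) => ?_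
  have sphere_integral : ∫⁻ ω : sphere (0 : E) 1, ∫⁻ x, ‖f (x + r • (ω : E)) - f x‖ₑ ^ p ∂μ
      ∂μ.toSphere = sphereModulus μ f p r :=
    (lintegral_prod _ (hmeas.comp (f := fun q : sphere (0 : E) 1 × E => (r • (q.1 : E), q.2))
      (by fun_prop)).aemeasurable).symm
  have hpow : r ^ (finrank ℝ E - 1) * r ^ (-((finrank ℝ E : ℝ) + s * p)) = r ^ (-1 - s * p) := by
    rw [← rpow_natCast, Nat.cast_pred finrank_pos, ← rpow_add hr]
    ring_nf
  simp only [norm_smul, norm_eq_of_mem_sphere, mul_one, norm_of_nonneg hr.le]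
  rw [lintegral_const_mul' _ _ ENNReal.ofReal_ne_top, sphere_integral, ← mul_assoc,
    ← ENNReal.ofReal_mul (by positivity), hpow]

end Gagliardo

section Lipschitz

open Metric Set
open scoped NNReal

lemma lintegral_enorm_rpow_ne_top_of_hasCompactSupport {X F : Type*} [TopologicalSpace X]
    [MeasurableSpace X] [OpensMeasurableSpace X] [NormedAddCommGroup F] (μ : Measure X)
    [IsFiniteMeasureOnCompacts μ] {f : X → F} (hf : Continuous f) (hsupp : HasCompactSupport f)
    {p : ℝ} (hp : 0 < p) : ∫⁻ x, ‖f x‖ₑ ^ p ∂μ ≠ ∞ := by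
  have hLp : MemLp f (ENNReal.ofReal p) μ := hf.memLp_of_hasCompactSupport hsupp
  have := lintegral_rpow_enorm_lt_top_of_eLpNorm_lt_top (by simpa using hp) ENNReal.ofReal_ne_top
    hLp.eLpNorm_lt_top
  rw [ENNReal.toReal_ofReal hp.le] at this
  exact this.ne

variable {E F : Type*} [NormedAddCommGroup E] [NormedSpace ℝ E]
  [NormedAddCommGroup F] [NormedSpace ℝ F] {p : ℝ} {f : E → F} {L : ℝ≥0}

lemma enorm_slope_rpow_le_indicator_of_lipschitzWith (hf : LipschitzWith L f) (hp : 0 < p)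
    {r : ℝ} (hr : r ∈ Ioo (0 : ℝ) 1) (x : E) {ω : E} (hω : ‖ω‖ = 1) :
    ‖r⁻¹ • (f (x + r • ω) - f x)‖ₑ ^ p ≤
      (cthickening 1 (tsupport f)).indicator (fun _ => (L : ℝ≥0∞) ^ p) x := by
  have hstep : ‖r • ω‖ₑ = ENNReal.ofReal r := by
    rw [← ofReal_norm, norm_smul, hω, mul_one, norm_of_nonneg hr.1.le]
  by_cases hx : x ∈ cthickening 1 (tsupport f)
  · rw [indicator_of_mem hx]
    gcongr
    calc ‖r⁻¹ • (f (x + r • ω) - f x)‖ₑ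
        = ENNReal.ofReal r⁻¹ * edist (f (x + r • ω)) (f x) := by
          rw [enorm_smul, Real.enorm_of_nonneg (inv_nonneg.2 hr.1.le), edist_eq_enorm_sub]
      _ ≤ ENNReal.ofReal r⁻¹ * (L * ENNReal.ofReal r) := by
          gcongr
          simpa [edist_eq_enorm_sub, hstep] using hf (x + r • ω) x
      _ = L := by
          rw [mul_left_comm, ← ENNReal.ofReal_mul (inv_nonneg.2 hr.1.le),
            inv_mul_cancel₀ hr.1.ne', ENNReal.ofReal_one, mul_one]
  · have eq_zero_of_dist_le (y : E) (hxy : dist x y ≤ 1) : f y = 0 :=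
      image_eq_zero_of_notMem_tsupport fun hy => hx (mem_cthickening_of_dist_le x y 1 _ hy hxy)
    have hdist : dist x (x + r • ω) ≤ 1 := by
      simpa [norm_smul, hω, abs_of_pos hr.1] using hr.2.le
    simp [eq_zero_of_dist_le x (by simp), eq_zero_of_dist_le _ hdist, hp]

variable [MeasurableSpace E]

lemma sphereModulus_div_rpow (μ : Measure E) (hp : 0 ≤ p) {r : ℝ} (hr : 0 < r) :
    sphereModulus μ f p r / ENNReal.ofReal r ^ p =
      ∫⁻ q : sphere (0 : E) 1 × E, ‖r⁻¹ • (f (q.2 + r • (q.1 : E)) - f q.2)‖ₑ ^ p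
        ∂(μ.toSphere.prod μ) := by
  have hrp : (ENNReal.ofReal r ^ p)⁻¹ ≠ ∞ := by simp [ENNReal.rpow_eq_zero_iff, hr]
  rw [ENNReal.div_eq_inv_mul, sphereModulus, ← lintegral_const_mul' _ _ hrp]
  refine lintegral_congr fun q => ?_
  rw [enorm_smul, ENNReal.mul_rpow_of_nonneg _ _ hp, Real.enorm_of_nonneg (inv_nonneg.2 hr.le),
    ENNReal.ofReal_inv_of_pos hr, ENNReal.inv_rpow]

lemma sphereModulus_div_rpow_le (μ : Measure E) (hf : LipschitzWith L f) (hp : 0 < p) {r : ℝ}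
    (hr : r ∈ Ioo (0 : ℝ) 1) :
    sphereModulus μ f p r / ENNReal.ofReal r ^ p ≤ ∫⁻ q : sphere (0 : E) 1 × E,
      (cthickening 1 (tsupport f)).indicator (fun _ => (L : ℝ≥0∞) ^ p) q.2
        ∂(μ.toSphere.prod μ) := by
  rw [sphereModulus_div_rpow μ hp.le hr.1]
  exact lintegral_mono fun q => enorm_slope_rpow_le_indicator_of_lipschitzWith hf hp hr q.2
    (norm_eq_of_mem_sphere q.1)

variable [FiniteDimensional ℝ E] [BorelSpace E] (μ : Measure E) [μ.IsAddHaarMeasure]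

lemma lintegral_sphere_prod_indicator_const_ne_top {K : Set E} (hK : IsCompact K) {c : ℝ≥0∞}
    (hc : c ≠ ∞) :
    ∫⁻ q : sphere (0 : E) 1 × E, K.indicator (fun _ => c) q.2 ∂(μ.toSphere.prod μ) ≠ ∞ := by
  have hmeas : Measurable fun q : sphere (0 : E) 1 × E => K.indicator (fun _ => c) q.2 :=
    (measurable_const.indicator hK.measurableSet).comp measurable_snd
  have hμK : μ K ≠ ∞ := hK.measure_ne_top
  rw [lintegral_prod _ hmeas.aemeasurable]
  simp only [lintegral_indicator_const hK.measurableSet, lintegral_const]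
  finiteness

variable [FiniteDimensional ℝ F]

lemma tendsto_sphereModulus_div_rpow (hf : LipschitzWith L f) (hsupp : HasCompactSupport f)
    (hp : 0 < p) :
    Tendsto (fun r => sphereModulus μ f p r / ENNReal.ofReal r ^ p) (𝓝[>] 0)
      (𝓝 (∫⁻ q : sphere (0 : E) 1 × E, ‖fderiv ℝ f q.2 q.1‖ₑ ^ p ∂(μ.toSphere.prod μ))) := by
  have dominated : Tendsto (fun r : ℝ => ∫⁻ q : sphere (0 : E) 1 × E,
      ‖r⁻¹ • (f (q.2 + r • (q.1 : E)) - f q.2)‖ₑ ^ p ∂(μ.toSphere.prod μ)) (𝓝[>] 0)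
      (𝓝 (∫⁻ q : sphere (0 : E) 1 × E, ‖fderiv ℝ f q.2 q.1‖ₑ ^ p ∂(μ.toSphere.prod μ))) := by
    refine tendsto_lintegral_filter_of_dominated_convergence
      (fun q => (cthickening 1 (tsupport f)).indicator (fun _ => (L : ℝ≥0∞) ^ p) q.2)
      (.of_forall fun r => ?_) ?_
      (lintegral_sphere_prod_indicator_const_ne_top μ hsupp.isCompact.cthickening
        (by finiteness)) ?_
    · have hslope : Continuous fun q : sphere (0 : E) 1 × E =>
          r⁻¹ • (f (q.2 + r • (q.1 : E)) - f q.2) := by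
        have := hf.continuous
        fun_prop
      exact hslope.enorm.measurable.pow_const p
    · filter_upwards [Ioo_mem_nhdsGT one_pos] with r hr
      exact .of_forall fun q => enorm_slope_rpow_le_indicator_of_lipschitzWith hf hp hr q.2
        (norm_eq_of_mem_sphere q.1)
    · filter_upwards [Measure.quasiMeasurePreserving_snd.ae (hf.ae_differentiableAt (μ := μ))]
        with q hq
      have hline := (hq.hasFDerivAt.hasLineDerivAt (q.1 : E)).tendsto_slope_zero_right
      exact (ENNReal.continuous_rpow_const.tendsto _).comp hline.enorm
  refine dominated.congr' ?_
  filter_upwards [self_mem_nhdsWithin] with r hr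
  exact (sphereModulus_div_rpow μ hp.le hr).symm

lemma tendsto_one_sub_mul_gagliardoEnergy [Nontrivial E] (hf : LipschitzWith L f)
    (hsupp : HasCompactSupport f) (hp : 0 < p) :
    Tendsto (fun s : ℝ => ENNReal.ofReal (1 - s) * gagliardoEnergy μ f p s) (𝓝[<] 1)
      (𝓝 (ENNReal.ofReal p⁻¹ *
        ∫⁻ q : sphere (0 : E) 1 × E, ‖fderiv ℝ f q.2 q.1‖ₑ ^ p ∂(μ.toSphere.prod μ))) := by
  have hLp := lintegral_enorm_rpow_ne_top_of_hasCompactSupport μ hf.continuous hsupp hp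
  simp only [gagliardoEnergy_eq_lintegral_sphereModulus μ hp.le hf.continuous]
  exact tendsto_one_sub_mul_lintegral_Ioi_rpow_mul hp (measurable_sphereModulus μ hf.continuous p)
    (by finiteness) (sphereModulus_le μ hp.le hf.continuous)
    (lintegral_sphere_prod_indicator_const_ne_top μ hsupp.isCompact.cthickening (by finiteness))
    (fun _ hr => sphereModulus_div_rpow_le μ hf hp hr)
    (tendsto_sphereModulus_div_rpow μ hf hsupp hp)

end Lipschitz

section FDerivIntegral

open scoped NNReal

variable {E F : Type*} [NormedAddCommGroup E] [NormedSpace ℝ E] [MeasurableSpace E]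
  [OpensMeasurableSpace E] [NormedAddCommGroup F] [NormedSpace ℝ F] [CompleteSpace F]
  (μ : Measure E) [IsFiniteMeasureOnCompacts μ] {p : ℝ} {f : E → F} {L : ℝ≥0}

lemma integrable_norm_fderiv_rpow (hf : LipschitzWith L f) (hsupp : HasCompactSupport f)
    (hp : 0 < p) : Integrable (fun x => ‖fderiv ℝ f x‖ ^ p) μ := by
  have hsubset : Function.support (fun x => ‖fderiv ℝ f x‖ ^ p) ⊆ tsupport f := fun x hx =>
    support_fderiv_subset ℝ fun h => hx (by simp [h, hp.ne'])
  rw [← integrableOn_iff_integrable_of_support_subset hsubset]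
  refine Measure.integrableOn_of_bounded (M := L ^ p) hsupp.isCompact.measure_ne_top
    ((measurable_fderiv ℝ f).norm.pow_const p).aestronglyMeasurable (.of_forall fun x => ?_)
  rw [norm_of_nonneg (by positivity)]
  gcongr
  exact norm_fderiv_le_of_lipschitz ℝ hf

lemma lintegral_enorm_fderiv_rpow (hf : LipschitzWith L f) (hsupp : HasCompactSupport f)
    (hp : 0 < p) :
    ∫⁻ x, ‖fderiv ℝ f x‖ₑ ^ p ∂μ = ENNReal.ofReal (∫ x, ‖fderiv ℝ f x‖ ^ p ∂μ) := by
  rw [ofReal_integral_eq_lintegral_ofReal (integrable_norm_fderiv_rpow μ hf hsupp hp)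
    (.of_forall fun x => by positivity)]
  refine lintegral_congr fun x => ?_
  rw [← ENNReal.ofReal_rpow_of_nonneg (norm_nonneg _) hp.le, ofReal_norm]

end FDerivIntegral

section Gradient

open Module Metric
open scoped NNReal

variable {E : Type*} [NormedAddCommGroup E] [InnerProductSpace ℝ E] [FiniteDimensional ℝ E]
  [MeasurableSpace E] [BorelSpace E] {p : ℝ} {f : E → ℝ} {L : ℝ≥0}

lemma lintegral_sphere_prod_enorm_fderiv_rpow [Nontrivial E] (hp : 0 ≤ p) (f : E → ℝ) :
    ∫⁻ q : sphere (0 : E) 1 × E, ‖fderiv ℝ f q.2 q.1‖ₑ ^ p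
        ∂((volume : Measure E).toSphere.prod volume) =
      ENNReal.ofReal (sphereMoment (finrank ℝ E) p) * ∫⁻ x, ‖fderiv ℝ f x‖ₑ ^ p := by
  have heval : Measurable fun w : (E →L[ℝ] ℝ) × E => w.1 w.2 :=
    Continuous.measurable (by fun_prop)
  have hmeas : Measurable fun q : sphere (0 : E) 1 × E => ‖fderiv ℝ f q.2 q.1‖ₑ ^ p :=
    (heval.comp (((measurable_fderiv ℝ f).comp measurable_snd).prodMk
      (measurable_subtype_coe.comp measurable_fst))).enorm.pow_const p
  rw [lintegral_prod_symm _ hmeas.aemeasurable]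
  simp only [lintegral_sphere_enorm_dual_rpow hp]
  exact lintegral_const_mul' _ _ ENNReal.ofReal_ne_top

theorem bbm_limit_gagliardo_smooth_general [Nontrivial E] (hp : 0 < p) (hf : LipschitzWith L f)
    (hsupp : HasCompactSupport f) :
    Tendsto (fun s : ℝ => ENNReal.ofReal (1 - s) *
        ∫⁻ x, ∫⁻ y, ENNReal.ofReal (|f x - f y| ^ p / ‖x - y‖ ^ ((finrank ℝ E : ℝ) + s * p)))
      (𝓝[<] (1 : ℝ))
      (𝓝 (ENNReal.ofReal
        (2 * π ^ (((finrank ℝ E : ℝ) - 1) / 2) * Gamma ((p + 1) / 2) /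
            (p * Gamma (((finrank ℝ E : ℝ) + p) / 2)) *
          ∫ x, ‖fderiv ℝ f x‖ ^ p))) := by
  have energy_limit := tendsto_one_sub_mul_gagliardoEnergy volume hf hsupp hp
  have const_eq : p⁻¹ * sphereMoment (finrank ℝ E) p =
      2 * π ^ (((finrank ℝ E : ℝ) - 1) / 2) * Gamma ((p + 1) / 2) /
        (p * Gamma (((finrank ℝ E : ℝ) + p) / 2)) := by
    rw [sphereMoment]
    field_simp
  rw [lintegral_sphere_prod_enorm_fderiv_rpow hp.le, lintegral_enorm_fderiv_rpow volume hf hsupp hp,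
    ← mul_assoc, ← ENNReal.ofReal_mul (by positivity), ← ENNReal.ofReal_mul' (by positivity),
    const_eq] at energy_limit
  exact energy_limit

end Gradient

theorem bbm_limit_gagliardo_smooth (n : ℕ) (hn : 1 ≤ n) (p : ℝ) (hp : 1 ≤ p)
    (f : EuclideanSpace ℝ (Fin n) → ℝ) (hf : ContDiff ℝ (⊤ : ℕ∞) f)
    (hsupp : HasCompactSupport f) :
    Tendsto (fun s : ℝ => ENNReal.ofReal (1 - s) *
        ∫⁻ x, ∫⁻ y, ENNReal.ofReal (|f x - f y| ^ p / ‖x - y‖ ^ ((n : ℝ) + s * p)))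
      (𝓝[<] (1 : ℝ))
      (𝓝 (ENNReal.ofReal
        (2 * π ^ (((n : ℝ) - 1) / 2) * Real.Gamma ((p + 1) / 2) /
            (p * Real.Gamma (((n : ℝ) + p) / 2)) *
          ∫ x, ‖fderiv ℝ f x‖ ^ p))) := by
  have : Nonempty (Fin n) := ⟨⟨0, hn⟩⟩
  obtain ⟨L, hL⟩ := hf.lipschitzWith_of_hasCompactSupport hsupp (by simp)
  simpa only [finrank_euclideanSpace_fin] using
    bbm_limit_gagliardo_smooth_general (one_pos.trans_le hp) hL hsupp
end
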